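/- Let g = (a ⊕ r) ⋉ n where r is semisimple, a is abelian, n is an abelian ideal, [a, r] = 0, and the inner product makes a ⊕ r ⊕ n orthogonal with: ad Y|_n skew-symmetric for Y in a subspace k ⊆ r and symmetric for Y in p (where r = k ⊕ p is a Cartan decomposition), ad A|_n normal for all A ∈ a, and Ric_r < 0 on r with Ric_r(k, p) = 0. Choose a basis {A₁,…,A_k} of a, orthonormal for the chosen inner product on a, with tr(ad A_i|_n) = 0 for i ≥ 2 and all eigenvalues of ad A₁|_n having positive real part. Then the mean curvature vector is H = tr(ad A₁|_n)·A₁, and Ric|_n = −tr(ad A₁|_n)·S(ad A₁|_n) is negative definite on n. -/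

import Mathlib

open scoped RealInnerProductSpace

/-- A linear form on a real Lie algebra with trivial radical vanishes as soon as it vanishes on
all brackets. -/
theorem linearForm_eq_zero_of_forall_lie {L : Type*} [LieRing L] [LieAlgebra ℝ L]
    [FiniteDimensional ℝ L] [LieAlgebra.HasTrivialRadical ℝ L] (χ : L →ₗ[ℝ] ℝ)
    (hχ : ∀ x y : L, χ ⁅x, y⁆ = 0) : χ = 0 := by
  have hnd := LieAlgebra.IsKilling.killingForm_nondegenerate ℝ L
  obtain ⟨z, hz⟩ : ∃ z, killingForm ℝ L z = χ :=
    ((LinearMap.injective_iff_surjective_of_finrank_eq_finrank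
      (Subspace.dual_finrank_eq (K := ℝ) (V := L)).symm).mp
      (LinearMap.separatingLeft_iff_ker_eq_bot.mp hnd.1 |> LinearMap.ker_eq_bot.mp)) χ
  have hcentral : z ∈ LieAlgebra.center ℝ L := by
    rw [LieModule.mem_maxTrivSubmodule]
    intro x
    refine hnd.1 _ fun y => ?_
    rw [← lie_skew, map_neg, LinearMap.neg_apply, LieModule.traceForm_apply_lie_apply]
    change -(killingForm ℝ L z ⁅x, y⁆) = 0
    rw [hz, hχ, neg_zero]
  rw [LieAlgebra.center_eq_bot, LieSubmodule.mem_bot] at hcentral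
  rw [← hz, hcentral, map_zero]

/-- The same for a Lie bracket given as a bilinear map: if no nonzero ideal is abelian, a linear
form vanishing on all brackets is zero. -/
theorem linearForm_eq_zero_of_forall_bracket {V : Type*} [AddCommGroup V] [Module ℝ V]
    [FiniteDimensional ℝ V] (br : V →ₗ[ℝ] V →ₗ[ℝ] V)
    (hskew : ∀ X Y, br X Y = - br Y X)
    (hjac : ∀ X Y Z, br X (br Y Z) + br Y (br Z X) + br Z (br X Y) = 0)
    (hideal : ∀ I : Submodule ℝ V, (∀ x, ∀ y ∈ I, br x y ∈ I) →
      (∀ x ∈ I, ∀ y ∈ I, br x y = 0) → I = ⊥)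
    (χ : V →ₗ[ℝ] ℝ) (hχ : ∀ x y, χ (br x y) = 0) : χ = 0 := by
  have : IsAddTorsionFree V := .of_isTorsionFree ℝ V
  let _ : LieRing V :=
    { bracket := fun x y => br x y
      add_lie := fun x y z => by simp
      lie_add := fun x y z => by simp
      lie_self := fun x => self_eq_neg.mp (hskew x x)
      leibniz_lie := fun x y z => by
        have h := hjac x y z
        rw [hskew z x, map_neg, hskew z (br x y)] at h
        change br x (br y z) = br (br x y) z + br y (br x z)
        rw [← sub_eq_zero, ← h]
        abel }
  let _ : LieAlgebra ℝ V := { lie_smul := fun t x y => map_smul (br x) t y }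
  have : LieAlgebra.HasTrivialRadical ℝ V := by
    rw [LieAlgebra.hasTrivialRadical_iff_no_abelian_ideals]
    intro I hI
    rw [← LieSubmodule.toSubmodule_eq_bot]
    refine hideal _ (fun x y hy => I.lie_mem hy) fun x hx y hy => ?_
    have := hI.trivial ⟨x, hx⟩ ⟨y, hy⟩
    exact congrArg Subtype.val this
  exact linearForm_eq_zero_of_forall_lie χ hχ

open Polynomial in
/-- If `μ ≤ 0` and `(2T - l)² v = μ v` with `v ≠ 0`, then the characteristic polynomial of `T` has
a complex root of real part `l / 2`. -/
theorem exists_isRoot_charpoly_of_sq_apply {F : Type*} [AddCommGroup F] [Module ℝ F]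
    [FiniteDimensional ℝ F] (T : F →ₗ[ℝ] F) {l μ : ℝ} (hμ : μ ≤ 0) {v : F} (hv : v ≠ 0)
    (h : (2 : ℝ) • T ((2 : ℝ) • T v - l • v) - l • ((2 : ℝ) • T v - l • v) = μ • v) :
    ∃ z : ℂ, (T.charpoly.map (algebraMap ℝ ℂ)).IsRoot z ∧ z.re = l / 2 := by
  by_contra! hne
  set s : ℂ := Complex.I * (√(-μ) : ℝ)
  have hs : s ^ 2 = (μ : ℂ) := by
    rw [mul_pow, Complex.I_sq, ← Complex.ofReal_pow, Real.sq_sqrt (by linarith)]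
    simp
  have hcop (z : ℂ) (hz : z.re = l / 2) :
      IsCoprime (T.charpoly.map (algebraMap ℝ ℂ)) (X - C z) := by
    refine ((irreducible_X_sub_C z).coprime_iff_not_dvd.mpr fun hd => ?_).symm
    exact hne z (dvd_iff_isRoot.mp hd) hz
  have hq : IsCoprime T.charpoly ((2 * X - C l) ^ 2 - C μ : ℝ[X]) := by
    rw [← isCoprime_map (algebraMap ℝ ℂ)]
    have h2 : IsUnit (C (4 : ℂ)) := isUnit_C.mpr (by norm_num)
    have hfac : ((2 * X - C l) ^ 2 - C μ : ℝ[X]).map (algebraMap ℝ ℂ) =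
        C 4 * ((X - C ((l + s) / 2)) * (X - C ((l - s) / 2))) := by
      have hsC : (C s : ℂ[X]) ^ 2 = C (μ : ℂ) := by rw [← C_pow, hs]
      have hp : (C ((l + s) / 2) : ℂ[X]) = C (1 / 2) * (C (l : ℂ) + C s) := by
        rw [← C_add, ← C_mul]; congr 1; ring
      have hm : (C ((l - s) / 2) : ℂ[X]) = C (1 / 2) * (C (l : ℂ) - C s) := by
        rw [← C_sub, ← C_mul]; congr 1; ring
      have h12 : (C (1 / 2) : ℂ[X]) * 2 = 1 := by
        rw [← C_ofNat, ← C_mul]; norm_num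
      have h4 : (C 4 : ℂ[X]) = 4 := C_ofNat 4
      simp only [Polynomial.map_sub, Polynomial.map_pow, Polynomial.map_mul, map_X, map_C,
        Polynomial.map_ofNat, Complex.coe_algebraMap]
      rw [hp, hm, h4, ← hsC]
      linear_combination (4 * X * C (l : ℂ) - (C (l : ℂ) ^ 2 - C s ^ 2) *
        (C (1 / 2) * 2 + 1)) * h12
    rw [hfac]
    refine (isCoprime_mul_unit_left_right h2 _ _).mpr (IsCoprime.mul_right (hcop _ ?_) (hcop _ ?_))
    · simp [s]
    · simp [s]
  obtain ⟨A, B, hAB⟩ := hq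
  have h1 := congrArg (fun P => aeval T P v) hAB
  simp only [map_add, map_mul, LinearMap.aeval_self_charpoly, mul_zero, zero_add, map_one,
    Module.End.one_apply, Module.End.mul_apply] at h1
  have hker : aeval T ((2 * X - C l) ^ 2 - C μ : ℝ[X]) v = 0 := by
    simp only [pow_two, map_sub, map_mul, aeval_X, aeval_C, map_ofNat, LinearMap.sub_apply,
      Module.End.mul_apply, Module.algebraMap_end_apply, sub_eq_zero]
    convert h using 1
    simp only [Module.End.ofNat_apply, map_sub, map_smul, ofNat_smul_eq_nsmul]
    module
  rw [hker, map_zero] at h1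
  exact hv h1.symm

/-- A normal operator all of whose eigenvalues have positive real part has positive definite
symmetric part. -/
theorem inner_apply_self_pos_of_normal {F : Type*} [NormedAddCommGroup F] [InnerProductSpace ℝ F]
    [FiniteDimensional ℝ F] (T : F →ₗ[ℝ] F)
    (hT : T ∘ₗ LinearMap.adjoint T = LinearMap.adjoint T ∘ₗ T)
    (heig : ∀ z : ℂ, ((T.charpoly).map (algebraMap ℝ ℂ)).IsRoot z → 0 < z.re)
    {x : F} (hx : x ≠ 0) : 0 < ⟪T x, x⟫ := by
  set Tadj := LinearMap.adjoint T
  have hTcomm (u : F) : T (Tadj u) = Tadj (T u) := LinearMap.congr_fun hT u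
  have hadj (u w : F) : ⟪Tadj u, w⟫ = ⟪u, T w⟫ := LinearMap.adjoint_inner_left T w u
  have hadj' (u w : F) : ⟪T u, w⟫ = ⟪u, Tadj w⟫ := (LinearMap.adjoint_inner_right T u w).symm
  set S := T + Tadj with hS
  set K := T - Tadj with hK
  have hSsym : S.IsSymmetric := fun u w => by
    simp only [hS, LinearMap.add_apply, inner_add_left, inner_add_right, hadj, hadj']; ring
  have hKskew (u w : F) : ⟪K u, w⟫ = -⟪u, K w⟫ := by
    simp only [hK, LinearMap.sub_apply, inner_sub_left, inner_sub_right, hadj, hadj']; ring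
  have hKsym : (K * K).IsSymmetric := fun u w => by
    simp only [Module.End.mul_apply, hKskew, neg_neg]
  have hSK : Commute S K := by
    ext u
    simp only [hS, hK, Module.End.mul_apply, LinearMap.add_apply, LinearMap.sub_apply, map_add,
      map_sub, hTcomm]
    abel
  have hpos (l : ℝ) (hl : Module.End.HasEigenvalue S l) : 0 < l := by
    have hsup := LinearMap.IsSymmetric.iSup_eigenspace_inf_eigenspace_of_commute (α := l) hKsym
      (hSK.mul_right hSK)
    obtain ⟨μ, hμ⟩ : ∃ μ, Module.End.eigenspace S l ⊓ Module.End.eigenspace (K * K) μ ≠ ⊥ := by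
      by_contra! hbot
      simp only [hbot, iSup_bot] at hsup
      exact hl.exists_hasEigenvector.elim fun w hw => hw.2 (by simpa [← hsup] using hw.1)
    obtain ⟨v, ⟨hv1, hv2⟩, hv0⟩ := Submodule.exists_mem_ne_zero_of_ne_bot hμ
    have hSv : S v = l • v := Module.End.mem_eigenspace_iff.mp hv1
    have hKv : K (K v) = μ • v := Module.End.mem_eigenspace_iff.mp hv2
    have hμ0 : μ ≤ 0 := by
      have h1 : μ * ⟪v, v⟫ = -⟪K v, K v⟫ := by
        rw [← real_inner_smul_left, ← hKv, hKskew]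
      have h2 : 0 < ⟪v, v⟫ := real_inner_self_pos.mpr hv0
      have h3 : 0 ≤ ⟪K v, K v⟫ := real_inner_self_nonneg
      by_contra! hcon
      nlinarith [mul_pos hcon h2]
    have h2T (u : F) : (2 : ℝ) • T u = S u + K u := by
      simp only [hS, hK, LinearMap.add_apply, LinearMap.sub_apply, two_smul]; abel
    have hSKv : S (K v) = K (S v) := LinearMap.congr_fun hSK v
    obtain ⟨z, hz, hre⟩ := exists_isRoot_charpoly_of_sq_apply T (l := l) hμ0 hv0 (by
      rw [h2T v, hSv, add_sub_cancel_left, h2T, hSKv, hSv, hKv, map_smul, add_sub_cancel_left])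
    linarith [heig z hz]
  have hsum : ⟪S x, x⟫ = 2 * ⟪T x, x⟫ := by
    rw [hS, LinearMap.add_apply, inner_add_left, hadj, real_inner_comm (T x) x]; ring
  suffices 0 < ⟪S x, x⟫ by linarith
  set e := hSsym.eigenvectorBasis rfl
  have hexp : ⟪S x, x⟫ = ∑ i, hSsym.eigenvalues rfl i * ⟪e i, x⟫ ^ 2 := by
    rw [← e.sum_inner_mul_inner]
    refine Finset.sum_congr rfl fun i _ => ?_
    rw [hSsym, hSsym.apply_eigenvectorBasis, RCLike.ofReal_real_eq_id, id, real_inner_smul_right,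
      real_inner_comm]
    ring
  rw [hexp]
  have hval (i) : 0 < hSsym.eigenvalues rfl i := hpos _ (hSsym.hasEigenvalue_eigenvalues rfl i)
  obtain ⟨i, hi⟩ : ∃ i, ⟪e i, x⟫ ≠ 0 := by
    by_contra! hall
    exact hx (InnerProductSpace.ext_inner_left_basis e.toBasis fun i => by simpa using hall i)
  exact Finset.sum_pos' (fun j _ => by have := hval j; positivity)
    ⟨i, Finset.mem_univ _, by have := hval i; positivity⟩

theorem trace_eq_sum_inner_apply_self {V : Type*} [NormedAddCommGroup V]
    [InnerProductSpace ℝ V] {ι : Type*} [Fintype ι] (T : V →ₗ[ℝ] V) (b : OrthonormalBasis ι ℝ V) :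
    LinearMap.trace ℝ V T = ∑ i, ⟪T (b i), b i⟫ := by
  rw [LinearMap.trace_eq_sum_inner T b]
  exact Finset.sum_congr rfl fun i _ => real_inner_comm _ _

section Ricci

variable {V : Type*} [NormedAddCommGroup V] [InnerProductSpace ℝ V] [FiniteDimensional ℝ V]
  {ι κ : Type*} [Fintype ι] [Fintype κ]

/-- The Ricci form of a bracket on an inner product space, without the mean curvature term. -/
noncomputable def unimodularRicci (br : V →ₗ[ℝ] V →ₗ[ℝ] V) (b : OrthonormalBasis ι ℝ V)
    (x y : V) : ℝ :=
  -(1/2) * ∑ i, ∑ j, ⟪br x (b i), b j⟫ * ⟪br y (b i), b j⟫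
  + (1/4) * ∑ i, ∑ j, ⟪br (b i) (b j), x⟫ * ⟪br (b i) (b j), y⟫
  - (1/2) * ∑ i, ⟪br x (br y (b i)), b i⟫

theorem sum_linearForm_mul_eq (b : OrthonormalBasis ι ℝ V) (c : OrthonormalBasis κ ℝ V)
    (f g : V →ₗ[ℝ] ℝ) : ∑ i, f (b i) * g (b i) = ∑ i, f (c i) * g (c i) := by
  have hrep (h : V →ₗ[ℝ] ℝ) : ∃ u, ∀ x, h x = ⟪u, x⟫ :=
    ⟨(InnerProductSpace.toDual ℝ V).symm h.toContinuousLinearMap, fun x => by simp⟩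
  obtain ⟨u, hu⟩ := hrep f
  obtain ⟨w, hw⟩ := hrep g
  simp only [hu, hw, real_inner_comm _ w, OrthonormalBasis.sum_inner_mul_inner]

theorem unimodularRicci_eq (br : V →ₗ[ℝ] V →ₗ[ℝ] V) (b : OrthonormalBasis ι ℝ V)
    (c : OrthonormalBasis κ ℝ V) (x y : V) :
    unimodularRicci br b x y = unimodularRicci br c x y := by
  have h1 : ∑ i, ∑ j, ⟪br x (b i), b j⟫ * ⟪br y (b i), b j⟫ =
      ∑ i, ∑ j, ⟪br x (c i), c j⟫ * ⟪br y (c i), c j⟫ := by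
    calc _ = ∑ i, ∑ j, ⟪br x (b i), c j⟫ * ⟪br y (b i), c j⟫ :=
          Finset.sum_congr rfl fun i _ =>
            sum_linearForm_mul_eq b c (innerₗ V (br x (b i))) (innerₗ V (br y (b i)))
      _ = _ := by
          refine Finset.sum_comm.trans ((Finset.sum_congr rfl fun j _ => ?_).trans Finset.sum_comm)
          exact sum_linearForm_mul_eq b c ((innerₗ V).flip (c j) ∘ₗ br x)
            ((innerₗ V).flip (c j) ∘ₗ br y)
  have h2 : ∑ i, ∑ j, ⟪br (b i) (b j), x⟫ * ⟪br (b i) (b j), y⟫ =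
      ∑ i, ∑ j, ⟪br (c i) (c j), x⟫ * ⟪br (c i) (c j), y⟫ := by
    calc _ = ∑ i, ∑ j, ⟪br (b i) (c j), x⟫ * ⟪br (b i) (c j), y⟫ :=
          Finset.sum_congr rfl fun i _ =>
            sum_linearForm_mul_eq b c ((innerₗ V).flip x ∘ₗ br (b i))
              ((innerₗ V).flip y ∘ₗ br (b i))
      _ = _ := by
          refine Finset.sum_comm.trans ((Finset.sum_congr rfl fun j _ => ?_).trans Finset.sum_comm)
          exact sum_linearForm_mul_eq b c ((innerₗ V).flip x ∘ₗ br.flip (c j))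
            ((innerₗ V).flip y ∘ₗ br.flip (c j))
  have h3 : ∑ i, ⟪br x (br y (b i)), b i⟫ = ∑ i, ⟪br x (br y (c i)), c i⟫ := by
    simp only [← LinearMap.comp_apply, ← trace_eq_sum_inner_apply_self]
  simp only [unimodularRicci, h1, h2, h3]

/-- An orthogonal family of subspaces spanning `V` has a subordinate orthonormal basis. -/
theorem exists_orthonormalBasis_subordinate [DecidableEq ι] (W : ι → Submodule ℝ V)
    (hW : Pairwise fun i j => W i ⟂ W j) (htop : iSup W = ⊤) :
    ∃ c : OrthonormalBasis (Fin (Module.finrank ℝ V)) ℝ V, ∀ m, ∃ i, c m ∈ W i := by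
  have hfam := OrthogonalFamily.of_pairwise hW
  have hint : DirectSum.IsInternal W := hfam.isInternal_iff.mpr (by simp [htop])
  exact ⟨hint.subordinateOrthonormalBasis rfl hfam, fun m =>
    ⟨_, hint.subordinateOrthonormalBasis_subordinate rfl m hfam⟩⟩

/-- The form `unimodularRicci` is not negative definite on a nonzero abelian ideal. -/
theorem eq_bot_of_unimodularRicci_neg (br : V →ₗ[ℝ] V →ₗ[ℝ] V)
    (hskew : ∀ X Y, br X Y = - br Y X) (b : OrthonormalBasis ι ℝ V)
    (I : Submodule ℝ V) (hI : ∀ x, ∀ y ∈ I, br x y ∈ I) (habel : ∀ x ∈ I, ∀ y ∈ I, br x y = 0)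
    (hneg : ∀ x ∈ I, x ≠ 0 → unimodularRicci br b x x < 0) : I = ⊥ := by
  classical
  obtain ⟨c, hc⟩ := exists_orthonormalBasis_subordinate ![I, Iᗮ]
    (fun i j hij => by
      fin_cases i <;> fin_cases j
      · exact absurd rfl hij
      · exact I.isOrtho_orthogonal_right
      · exact I.isOrtho_orthogonal_left
      · exact absurd rfl hij)
    (eq_top_iff.mpr <| I.sup_orthogonal_of_hasOrthogonalProjection.ge.trans <|
      sup_le (le_iSup ![I, Iᗮ] 0) (le_iSup ![I, Iᗮ] 1))
  have hmem (m) (hm : c m ∉ I) : c m ∈ Iᗮ := by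
    obtain ⟨i, hi⟩ := hc m
    fin_cases i
    · exact absurd hi hm
    · exact hi
  have hI' (x : V) (hx : x ∈ I) (y : V) : br x y ∈ I := by
    rw [hskew]; exact I.neg_mem (hI y x hx)
  let α (i j k : Fin (Module.finrank ℝ V)) : ℝ := ⟪br (c i) (c j), c k⟫ ^ 2
  let s (i : Fin (Module.finrank ℝ V)) : ℝ := if c i ∈ I then 1 else 0
  have hα (i j k) : α i j k = α j i k := by
    simp only [α]; rw [hskew, inner_neg_left, neg_sq]
  have hα0 (i j k) : 0 ≤ α i j k := sq_nonneg _
  have hric (k) (hk : c k ∈ I) : unimodularRicci br b (c k) (c k) =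
      -(1/2) * ∑ i, ∑ j, α k i j + (1/4) * ∑ i, ∑ j, α i j k := by
    have h0 : ∑ i, ⟪br (c k) (br (c k) (c i)), c i⟫ = 0 :=
      Finset.sum_eq_zero fun i _ => by rw [habel _ hk _ (hI' _ hk _), inner_zero_left]
    rw [unimodularRicci_eq br b c, unimodularRicci, h0]
    simp only [α, sq, mul_zero, sub_zero]
  have hfirst (i j k) : s i * α i j k = s i * (1 - s j) * s k * α i j k := by
    simp only [s]
    by_cases hi : c i ∈ I
    · by_cases hj : c j ∈ I
      · have : α i j k = 0 := by simp [α, habel _ hi _ hj]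
        simp [this]
      · by_cases hk : c k ∈ I
        · simp [hi, hj, hk]
        · have : α i j k = 0 := by
            simp [α, Submodule.inner_right_of_mem_orthogonal (hI' _ hi _) (hmem k hk)]
          simp [this]
    · simp [hi]
  have hX : ∑ k, s k * ∑ i, ∑ j, α k i j = ∑ i, ∑ j, ∑ k, s i * (1 - s j) * s k * α i j k := by
    simp only [Finset.mul_sum, hfirst]
  have hX' : ∑ k, s k * ∑ i, ∑ j, α k i j = ∑ i, ∑ j, ∑ k, s j * (1 - s i) * s k * α i j k := by
    rw [hX, Finset.sum_comm]
    simp only [hα]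
  have hY : ∑ k, s k * ∑ i, ∑ j, α i j k = ∑ i, ∑ j, ∑ k, s k * α i j k := by
    simp only [Finset.mul_sum]
    rw [Finset.sum_comm]
    exact Finset.sum_congr rfl fun i _ => Finset.sum_comm
  have hXY : 2 * ∑ k, s k * ∑ i, ∑ j, α k i j ≤ ∑ k, s k * ∑ i, ∑ j, α i j k := by
    rw [two_mul]
    nth_rewrite 1 [hX]
    rw [hX', hY]
    simp only [← Finset.sum_add_distrib]
    refine Finset.sum_le_sum fun i _ => Finset.sum_le_sum fun j _ => Finset.sum_le_sum fun k _ => ?_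
    have := hα0 i j k
    simp only [s]
    split_ifs <;> simp [this]
  have hsum : ∑ k, s k * unimodularRicci br b (c k) (c k) =
      -(1/2) * ∑ k, s k * ∑ i, ∑ j, α k i j + (1/4) * ∑ k, s k * ∑ i, ∑ j, α i j k := by
    rw [Finset.mul_sum, Finset.mul_sum, ← Finset.sum_add_distrib]
    refine Finset.sum_congr rfl fun k _ => ?_
    by_cases hk : c k ∈ I
    · rw [hric k hk]; ring
    · simp [s, hk]
  have hterm (k) : s k * unimodularRicci br b (c k) (c k) ≤ 0 := by
    by_cases hk : c k ∈ I
    · simpa [s, hk] using (hneg _ hk (c.orthonormal.ne_zero k)).le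
    · simp [s, hk]
  have hnone (k) : c k ∉ I := fun hk => by
    have hlt : ∑ k, s k * unimodularRicci br b (c k) (c k) < 0 :=
      Finset.sum_neg' (fun k _ => hterm k)
        ⟨k, Finset.mem_univ k, by simpa [s, hk] using hneg _ hk (c.orthonormal.ne_zero k)⟩
    linarith
  rw [← Submodule.orthogonal_eq_top_iff, eq_top_iff, ← c.toBasis.span_eq, Submodule.span_le]
  rintro _ ⟨k, rfl⟩
  simpa using hmem k (hnone k)

/-- If `unimodularRicci` is negative definite, then every linear form vanishing on brackets is
zero. -/
theorem linearForm_eq_zero_of_unimodularRicci_neg (br : V →ₗ[ℝ] V →ₗ[ℝ] V)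
    (hskew : ∀ X Y, br X Y = - br Y X)
    (hjac : ∀ X Y Z, br X (br Y Z) + br Y (br Z X) + br Z (br X Y) = 0)
    (b : OrthonormalBasis ι ℝ V) (hneg : ∀ x, x ≠ 0 → unimodularRicci br b x x < 0)
    (χ : V →ₗ[ℝ] ℝ) (hχ : ∀ x y, χ (br x y) = 0) : χ = 0 :=
  linearForm_eq_zero_of_forall_bracket br hskew hjac
    (fun I hI habel => eq_bot_of_unimodularRicci_neg br hskew b I hI habel fun x _ => hneg x) χ hχ

/-- On an abelian ideal `n` with an orthonormal basis of `V` whose members outside `n` lie in a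
subspace `h`, with `[h, h]` and `h` orthogonal to `n`, and act normally on `n`, the form
`unimodularRicci` vanishes. -/
theorem unimodularRicci_eq_zero_of_normal (br : V →ₗ[ℝ] V →ₗ[ℝ] V)
    (hskew : ∀ X Y, br X Y = - br Y X) (n h : Submodule ℝ V)
    (hn : ∀ x, ∀ y ∈ n, br x y ∈ n) (habel : ∀ x ∈ n, ∀ y ∈ n, br x y = 0)
    (horth : h ⟂ n) (hbr : ∀ x ∈ h, ∀ y ∈ h, br x y ∈ nᗮ)
    (adN : V → (n →ₗ[ℝ] n)) (hadN : ∀ x : V, ∀ v : n, (adN x v : V) = br x v)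
    (b : OrthonormalBasis ι ℝ V) (c : OrthonormalBasis κ ℝ V)
    (hc : ∀ i, c i ∈ n ∨ c i ∈ h ∧ adN (c i) ∘ₗ LinearMap.adjoint (adN (c i)) =
      LinearMap.adjoint (adN (c i)) ∘ₗ adN (c i)) (X Y : n) :
    unimodularRicci br b X Y = 0 := by
  classical
  rw [unimodularRicci_eq br b c, unimodularRicci]
  have h3 : ∑ i, ⟪br (X : V) (br (Y : V) (c i)), c i⟫ = 0 := Finset.sum_eq_zero fun i _ => by
    rw [hskew Y, map_neg, habel _ X.2 _ (hn _ _ Y.2), neg_zero, inner_zero_left]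
  let u (i : κ) : ℝ := ⟪br (c i) X, br (c i) Y⟫
  let γ (i j : κ) : ℝ := ⟪br (c i) (c j), (X : V)⟫ * ⟪br (c i) (c j), (Y : V)⟫
  have h1 : ∑ i, ∑ j, ⟪br (X : V) (c i), c j⟫ * ⟪br (Y : V) (c i), c j⟫ = ∑ i, u i := by
    refine Finset.sum_congr rfl fun i _ => ?_
    simp only [hskew X, hskew Y, inner_neg_left, neg_mul_neg, u]
    rw [← c.sum_inner_mul_inner]
    simp only [real_inner_comm]
  let s (i : κ) : ℝ := if c i ∈ n then 1 else 0
  have hγsymm (i j) : γ i j = γ j i := by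
    simp only [γ]; rw [hskew, inner_neg_left, inner_neg_left, neg_mul_neg]
  have hγs (i j) : s i * γ i j = (1 - s j) * γ i j := by
    simp only [s]
    by_cases hi : c i ∈ n <;> by_cases hj : c j ∈ n
    · simp [hi, hj, γ, habel _ hi _ hj]
    · simp [hi, hj]
    · simp [hi, hj]
    · have hz := Submodule.inner_left_of_mem_orthogonal X.2
        (hbr _ ((hc i).resolve_left hi).1 _ ((hc j).resolve_left hj).1)
      simp [γ, hz]
  have hu (i) : (1 - s i) * ∑ j, γ i j = u i := by
    by_cases hi : c i ∈ n
    · simp [s, u, hi, habel _ hi _ X.2]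
    · obtain ⟨hih, hnormal⟩ := (hc i).resolve_left hi
      have hadj (j) (Z : n) : ⟪br (c i) (c j), (Z : V)⟫ =
          ⟪c j, (LinearMap.adjoint (adN (c i)) Z : V)⟫ := by
        rcases hc j with hj | ⟨hj, -⟩
        · have := LinearMap.adjoint_inner_right (adN (c i)) ⟨c j, hj⟩ Z
          simpa only [Submodule.coe_inner, hadN] using this.symm
        · rw [Submodule.inner_left_of_mem_orthogonal Z.2 (hbr _ hih _ hj),
            horth.inner_eq hj (Submodule.coe_mem _)]
      simp only [γ, hadj, s, hi, if_false, sub_zero, one_mul]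
      simp only [real_inner_comm (LinearMap.adjoint (adN (c i)) X : V), c.sum_inner_mul_inner]
      rw [← Submodule.coe_inner, LinearMap.adjoint_inner_left, ← LinearMap.comp_apply, hnormal,
        LinearMap.comp_apply, LinearMap.adjoint_inner_right, Submodule.coe_inner, hadN, hadN]
  have h2 : ∑ i, ∑ j, γ i j = 2 * ∑ i, u i := by
    calc ∑ i, ∑ j, γ i j = ∑ i, ∑ j, s i * γ i j + ∑ i, ∑ j, (1 - s i) * γ i j := by
          simp only [← Finset.sum_add_distrib]
          exact Finset.sum_congr rfl fun i _ => Finset.sum_congr rfl fun j _ => by ring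
      _ = ∑ i, ∑ j, (1 - s i) * γ i j + ∑ i, ∑ j, (1 - s i) * γ i j := by
          congr 1
          simp only [hγs]
          rw [Finset.sum_comm]
          simp only [hγsymm]
      _ = 2 * ∑ i, u i := by
          simp only [← Finset.mul_sum, hu]; ring
  simp only [γ] at h2
  rw [h1, h2, h3]
  ring

end Ricci

/-- For `g = (a ⊕ r) ⋉ n` with `n` abelian, `[a,r] = 0`, orthogonal Cartan
decomposition `r = k ⊕ p` acting skew-symmetrically/symmetrically on `n`,
normal `ad a|_n`, `Ric_r < 0` with `Ric_r(k,p) = 0`, and a basis `A₁,…,A_K` of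
`a` with `tr(ad A_i|_n) = 0` for `i ≥ 2` and all eigenvalues of `ad A₁|_n` of
positive real part: the mean curvature vector is `H = tr(ad A₁|_n)·A₁` and
`Ric|_n = -tr(ad A₁|_n)·S(ad A₁|_n)` is negative definite on `n`. -/
theorem stmt19 {E : Type*} [NormedAddCommGroup E] [InnerProductSpace ℝ E]
    [FiniteDimensional ℝ E] {Nb q K : ℕ}
    (br : E →ₗ[ℝ] E →ₗ[ℝ] E)
    (hskew : ∀ X Y, br X Y = - br Y X)
    (hjac : ∀ X Y Z, br X (br Y Z) + br Y (br Z X) + br Z (br X Y) = 0)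
    (a r n k p : Submodule ℝ E)
    (hcompl : IsCompl (a ⊔ r) n) (hkp : k ⊔ p = r) (hkpdisj : Disjoint k p)
    (har : ∀ A ∈ a, ∀ Y ∈ r, br A Y = 0)            -- `[a, r] = 0`
    (habel : ∀ A ∈ a, ∀ A' ∈ a, br A A' = 0)        -- `a` abelian
    (hrsub : ∀ Y ∈ r, ∀ Y' ∈ r, br Y Y' ∈ r)        -- `r` a subalgebra
    (hnideal : ∀ x : E, ∀ y ∈ n, br x y ∈ n)        -- `n` an ideal
    (hnabel : ∀ x ∈ n, ∀ y ∈ n, br x y = 0)         -- `n` abelian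
    -- orthogonality of `a`, `r`, `n` and of `k`, `p`
    (horth1 : ∀ x ∈ a, ∀ y ∈ r, ⟪x, y⟫ = 0)
    (horth2 : ∀ x ∈ a, ∀ y ∈ n, ⟪x, y⟫ = 0)
    (horth3 : ∀ x ∈ r, ∀ y ∈ n, ⟪x, y⟫ = 0)
    (horth4 : ∀ x ∈ k, ∀ y ∈ p, ⟪x, y⟫ = 0)
    -- actions on `n`
    (adN : E → (n →ₗ[ℝ] n)) (hadN : ∀ x : E, ∀ v : n, (adN x v : E) = br x v)
    (hknskew : ∀ Y ∈ k, LinearMap.adjoint (adN Y) = - adN Y)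
    (hpnsym : ∀ Y ∈ p, LinearMap.adjoint (adN Y) = adN Y)
    (hanormal : ∀ A ∈ a,
      adN A ∘ₗ LinearMap.adjoint (adN A) = LinearMap.adjoint (adN A) ∘ₗ adN A)
    -- the Ricci form of the subalgebra `r` (with mean curvature zero) is
    -- negative definite and vanishes on `k × p`
    (bR : OrthonormalBasis (Fin q) ℝ r)
    (RicR : E → E → ℝ)
    (hRicR : ∀ x y, RicR x y =
      -(1/2) * ∑ i, ∑ j, ⟪br x (bR i : E), (bR j : E)⟫ * ⟪br y (bR i : E), (bR j : E)⟫
      + (1/4) * ∑ i, ∑ j, ⟪br (bR i : E) (bR j : E), x⟫ * ⟪br (bR i : E) (bR j : E), y⟫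
      - (1/2) * ∑ i, ⟪br x (br y (bR i : E)), (bR i : E)⟫)
    (hRicneg : ∀ Y ∈ r, Y ≠ 0 → RicR Y Y < 0)
    (hRickp : ∀ Y ∈ k, ∀ X ∈ p, RicR Y X = 0)
    -- the orthonormal basis `A₀, A₁, …` of `a`
    (A : Fin (K + 1) → E) (hAo : Orthonormal ℝ A) (hAmem : ∀ i, A i ∈ a)
    (hAspan : Submodule.span ℝ (Set.range A) = a)
    (htr0 : ∀ i : Fin (K + 1), i ≠ 0 → LinearMap.trace ℝ n (adN (A i)) = 0)
    -- all eigenvalues of `ad A₀|_n` have positive real part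
    (heig : ∀ z : ℂ, (((adN (A 0)).charpoly).map (algebraMap ℝ ℂ)).IsRoot z → 0 < z.re)
    -- the mean curvature vector and the full Ricci form of `g`
    (Hm : E) (hmean : ∀ W : E, ⟪Hm, W⟫ = LinearMap.trace ℝ E (br W))
    (b : OrthonormalBasis (Fin Nb) ℝ E)
    (Ric : E → E → ℝ)
    (hRic : ∀ x y, Ric x y =
      -(1/2) * ∑ i, ∑ j, ⟪br x (b i), b j⟫ * ⟪br y (b i), b j⟫
      + (1/4) * ∑ i, ∑ j, ⟪br (b i) (b j), x⟫ * ⟪br (b i) (b j), y⟫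
      - (1/2) * LinearMap.trace ℝ E (br x ∘ₗ br y)
      - (1/2) * (⟪br Hm x, y⟫ + ⟪x, br Hm y⟫)) :
    -- conclusion: `H = tr(ad A₀|_n)·A₀` and
    -- `Ric|_n = -tr(ad A₀|_n)·S(ad A₀|_n)` is negative definite on `n`
    Hm = (LinearMap.trace ℝ n (adN (A 0))) • A 0 ∧
    (∀ X Y : n, Ric (X : E) (Y : E) =
      -(LinearMap.trace ℝ n (adN (A 0))) *
        ⟪((1/2 : ℝ) • (adN (A 0) + LinearMap.adjoint (adN (A 0)))) X, Y⟫) ∧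
    (∀ X : n, X ≠ 0 → Ric (X : E) (X : E) < 0) := by
  have hrtrace (W : E) (hW : W ∈ r) : LinearMap.trace ℝ E (br W) = 0 := by
    let brR : r →ₗ[ℝ] r →ₗ[ℝ] r := LinearMap.mk₂ ℝ (fun x y => ⟨br x y, hrsub x x.2 y y.2⟩)
      (fun x y z => Subtype.ext (by simp)) (fun t x y => Subtype.ext (by simp))
      (fun x y z => Subtype.ext (by simp)) (fun t x y => Subtype.ext (by simp))
    have hχ := linearForm_eq_zero_of_unimodularRicci_neg brR
      (fun x y => Subtype.ext (hskew x y)) (fun x y z => Subtype.ext (hjac x y z)) bR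
      (fun x hx => by
        have := hRicneg x x.2 (by simpa using hx)
        rw [hRicR] at this
        exact this)
      (LinearMap.trace ℝ E ∘ₗ br ∘ₗ r.subtype) (fun x y => by
        have hcomm : br (br x y) = br x * br y - br y * br x := by
          ext z
          have h := hjac x y z
          rw [hskew z x, map_neg, hskew z (br x y)] at h
          simp only [LinearMap.sub_apply, Module.End.mul_apply]
          rw [← sub_eq_zero, ← neg_eq_zero, ← h]
          abel
        change LinearMap.trace ℝ E (br (br x y)) = 0
        rw [hcomm, map_sub, LinearMap.trace_mul_comm, sub_self])
    exact LinearMap.congr_fun hχ ⟨W, hW⟩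
  have hntrace (W : E) (hW : W ∈ n) : LinearMap.trace ℝ E (br W) = 0 := by
    have hmem (x : E) : br W x ∈ n := by
      rw [hskew]; exact n.neg_mem (hnideal x W hW)
    rw [← LinearMap.trace_restrict_eq_of_forall_mem n (br W) hmem]
    convert map_zero (LinearMap.trace ℝ n)
    ext v
    exact hnabel W hW v v.2
  have hkr : k ≤ r := hkp ▸ le_sup_left
  have hpr : p ≤ r := hkp ▸ le_sup_right
  have hdecomp (x : E) : ∃ y ∈ a, ∃ z ∈ r, ∃ w ∈ n, x = y + z + w := by
    obtain ⟨u, hu, w, hw, rfl⟩ := Submodule.mem_sup.mp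
      (hcompl.sup_eq_top ▸ Submodule.mem_top : x ∈ a ⊔ r ⊔ n)
    obtain ⟨y, hy, z, hz, rfl⟩ := Submodule.mem_sup.mp hu
    exact ⟨y, hy, z, hz, w, hw, rfl⟩
  have hatrace (W : E) (hW : W ∈ a) :
      LinearMap.trace ℝ E (br W) = LinearMap.trace ℝ n (adN W) := by
    have hmem (x : E) : br W x ∈ n := by
      obtain ⟨y, hy, z, hz, w, hw, rfl⟩ := hdecomp x
      rw [map_add, map_add, habel W hW y hy, har W hW z hz, zero_add, zero_add]
      exact hnideal W w hw
    rw [← LinearMap.trace_restrict_eq_of_forall_mem n (br W) hmem]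
    congr 1
    ext v
    exact (hadN W v).symm
  set t := LinearMap.trace ℝ n (adN (A 0)) with ht
  have hH : Hm = t • A 0 := by
    refine ext_inner_right ℝ fun x => ?_
    obtain ⟨y, hy, z, hz, w, hw, rfl⟩ := hdecomp x
    have hy' : ⟪Hm, y⟫ = ⟪t • A 0, y⟫ := by
      rw [← hAspan] at hy
      induction hy using Submodule.span_induction with
      | mem x hx =>
        obtain ⟨i, rfl⟩ := hx
        rw [hmean, hatrace _ (hAmem i), real_inner_smul_left, orthonormal_iff_ite.mp hAo]
        by_cases hi : i = 0
        · simp [hi, ht]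
        · simp [htr0 i hi, Ne.symm hi]
      | zero => simp
      | add x y _ _ hx hy => rw [inner_add_right, inner_add_right, hx, hy]
      | smul s x _ hx => rw [real_inner_smul_right, real_inner_smul_right, hx]
    rw [inner_add_right, inner_add_right, inner_add_right, inner_add_right, hy', hmean z,
      hmean w, hrtrace z hz, hntrace w hw, real_inner_smul_left _ z, real_inner_smul_left _ w,
      horth1 _ (hAmem 0) z hz, horth2 _ (hAmem 0) w hw, mul_zero]
  have hortho : a ⊔ r ⟂ n := Submodule.isOrtho_sup_left.mpr
    ⟨Submodule.isOrtho_iff_inner_eq.mpr horth2, Submodule.isOrtho_iff_inner_eq.mpr horth3⟩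
  have hbr (x : E) (hx : x ∈ a ⊔ r) (y : E) (hy : y ∈ a ⊔ r) : br x y ∈ nᗮ := by
    obtain ⟨x₁, hx₁, x₂, hx₂, rfl⟩ := Submodule.mem_sup.mp hx
    obtain ⟨y₁, hy₁, y₂, hy₂, rfl⟩ := Submodule.mem_sup.mp hy
    rw [map_add, map_add, LinearMap.add_apply, LinearMap.add_apply, habel _ hx₁ _ hy₁,
      hskew x₂ y₁, har _ hy₁ _ hx₂, har _ hx₁ _ hy₂, neg_zero, add_zero, zero_add, zero_add]
    exact hortho (le_sup_right (a := a) (hrsub _ hx₂ _ hy₂))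
  obtain ⟨c, hc⟩ := exists_orthonormalBasis_subordinate ![a, k, p, n]
    (by
      have hak : a ⟂ k := Submodule.isOrtho_iff_inner_eq.mpr fun x hx y hy => horth1 x hx y (hkr hy)
      have hap : a ⟂ p := Submodule.isOrtho_iff_inner_eq.mpr fun x hx y hy => horth1 x hx y (hpr hy)
      have hkp' : k ⟂ p := Submodule.isOrtho_iff_inner_eq.mpr horth4
      have han : a ⟂ n := hortho.mono_left le_sup_left
      have hkn : k ⟂ n := hortho.mono_left (hkr.trans le_sup_right)
      have hpn : p ⟂ n := hortho.mono_left (hpr.trans le_sup_right)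
      intro i j hij
      fin_cases i <;> fin_cases j <;>
        first
        | exact absurd rfl hij
        | assumption
        | exact Submodule.IsOrtho.symm ‹_›)
    (by
      rw [eq_top_iff, ← hcompl.sup_eq_top, ← hkp]
      exact sup_le (sup_le (le_iSup ![a, k, p, n] 0)
        (sup_le (le_iSup ![a, k, p, n] 1) (le_iSup ![a, k, p, n] 2))) (le_iSup ![a, k, p, n] 3))
  have hc' (i) : c i ∈ n ∨ c i ∈ a ⊔ r ∧ adN (c i) ∘ₗ LinearMap.adjoint (adN (c i)) =
      LinearMap.adjoint (adN (c i)) ∘ₗ adN (c i) := by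
    obtain ⟨m, hm⟩ := hc i
    fin_cases m
    · exact .inr ⟨le_sup_left (b := r) hm, hanormal _ hm⟩
    · exact .inr ⟨le_sup_right (a := a) (hkr hm), by
        rw [hknskew _ hm, LinearMap.comp_neg, LinearMap.neg_comp]⟩
    · exact .inr ⟨le_sup_right (a := a) (hpr hm), by rw [hpnsym _ hm]⟩
    · exact .inl hm
  have hRicn (X Y : n) : Ric (X : E) (Y : E) =
      -t * ⟪((1/2 : ℝ) • (adN (A 0) + LinearMap.adjoint (adN (A 0)))) X, Y⟫ := by
    have h0 := unimodularRicci_eq_zero_of_normal br hskew n (a ⊔ r) hnideal hnabel hortho hbr adN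
      hadN b c hc' X Y
    rw [unimodularRicci] at h0
    simp only [← LinearMap.comp_apply (br (X : E)), ← trace_eq_sum_inner_apply_self] at h0
    rw [hRic, h0, hH, LinearMap.smul_apply, LinearMap.add_apply, real_inner_smul_left,
      inner_add_left, LinearMap.adjoint_inner_left, Submodule.coe_inner, Submodule.coe_inner,
      hadN, hadN]
    simp only [map_smul, LinearMap.smul_apply, real_inner_smul_left, real_inner_smul_right]
    ring
  refine ⟨hH, hRicn, fun X hX => ?_⟩
  have hpos {x : n} (hx : x ≠ 0) : 0 < ⟪adN (A 0) x, x⟫ :=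
    inner_apply_self_pos_of_normal (adN (A 0)) (hanormal _ (hAmem 0)) heig hx
  have htpos : 0 < t := by
    have : Nontrivial n := ⟨X, 0, hX⟩
    rw [ht, trace_eq_sum_inner_apply_self _ (stdOrthonormalBasis ℝ n)]
    have : Nonempty (Fin (Module.finrank ℝ n)) := Fin.pos_iff_nonempty.mp Module.finrank_pos
    exact Finset.sum_pos (fun i _ => hpos ((stdOrthonormalBasis ℝ n).orthonormal.ne_zero i))
      Finset.univ_nonempty
  have hS : ⟪((1/2 : ℝ) • (adN (A 0) + LinearMap.adjoint (adN (A 0)))) X, X⟫ =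
      ⟪adN (A 0) X, X⟫ := by
    rw [LinearMap.smul_apply, real_inner_smul_left, LinearMap.add_apply, inner_add_left,
      LinearMap.adjoint_inner_left, real_inner_comm X]
    ring
  rw [hRicn, hS, neg_mul, neg_lt_zero]
  exact mul_pos htpos (hpos hX)
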